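/- Let n ≥ 2 be an even integer and let u be a radially symmetric normal solution on ℝ^n with smooth Q-curvature Q satisfying (n−1)! ≤ Q(x) ≤ C·(|x|+1)^k for all x ∈ ℝ^n, for some constants C > 0 and k ≥ 0. Then ∫_{ℝ^n} e^{n u(x)} dx ≤ |S^n|, and equality holds if and only if Q(x) = (n−1)! for all x. -/

import Mathlib

open MeasureTheory Real Filter RealInnerProductSpace

/-- Volume of the standard unit n-sphere in ℝ^{n+1}: |Sⁿ| = 2 π^{(n+1)/2} / Γ((n+1)/2). -/
noncomputable def sphereVol (n : ℕ) : ℝ :=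
  2 * Real.pi ^ ((n + 1 : ℝ) / 2) / Real.Gamma ((n + 1 : ℝ) / 2)

/-- `u` is a normal solution on ℝⁿ with Q-curvature `Q`: both are smooth, `Q·e^{nu} ∈ L¹`,
and `u(x) = (2/((n−1)!·|Sⁿ|)) ∫ log(|y|/|x−y|)·Q(y)·e^{n·u(y)} dy + C` for some constant `C`. -/
def IsNormalSolution (n : ℕ) (u Q : EuclideanSpace ℝ (Fin n) → ℝ) : Prop :=
  ContDiff ℝ (⊤ : ℕ∞) u ∧ ContDiff ℝ (⊤ : ℕ∞) Q ∧
  Integrable (fun x => Q x * Real.exp (n * u x)) ∧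
  ∃ C : ℝ, ∀ x, u x =
    (2 / ((Nat.factorial (n - 1) : ℝ) * sphereVol n)) *
      ∫ y, Real.log (‖y‖ / ‖x - y‖) * (Q y * Real.exp (n * u y)) + C

/-- The larger root of `X ^ 2 - A X + N`. -/
noncomputable def largerRoot (A N : ℝ) : ℝ := (A + √(A ^ 2 - 4 * N)) / 2

lemma largerRoot_isRoot {A N : ℝ} (h : 4 * N ≤ A ^ 2) :
    largerRoot A N ^ 2 - A * largerRoot A N + N = 0 := by
  have := Real.sq_sqrt (sub_nonneg.2 h)
  unfold largerRoot
  linear_combination this / 4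

lemma le_largerRoot {A N z : ℝ} (h : z ^ 2 - A * z + N ≤ 0) : z ≤ largerRoot A N := by
  have := (abs_le.1 (Real.abs_le_sqrt (x := 2 * z - A) (y := A ^ 2 - 4 * N) (by linarith))).2
  unfold largerRoot
  linarith

lemma le_largerRoot_of_le_mul {p q N : ℝ} (hN : N ≤ p * q) :
    p ≤ largerRoot (p + q) N ∧ q ≤ largerRoot (p + q) N :=
  ⟨le_largerRoot (by linarith), le_largerRoot (by linarith)⟩

lemma four_mul_le_add_sq {p q N : ℝ} (hN : N ≤ p * q) : 4 * N ≤ (p + q) ^ 2 := by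
  nlinarith [sq_nonneg (p - q)]

lemma largerRoot_mul {l : ℝ} (hl : 0 ≤ l) (A N : ℝ) :
    largerRoot (l * A) (l ^ 2 * N) = l * largerRoot A N := by
  unfold largerRoot
  rw [show (l * A) ^ 2 - 4 * (l ^ 2 * N) = l ^ 2 * (A ^ 2 - 4 * N) by ring,
    Real.sqrt_mul (sq_nonneg l), Real.sqrt_sq hl]
  ring

lemma largerRoot_mono {p q N m m' : ℝ} (hp : 0 ≤ p) (hN : N ≤ p * q) (hm : 0 ≤ m)
    (hmm : m ≤ m') :
    largerRoot (m * p + q) (m * N) ≤ largerRoot (m' * p + q) (m' * N) := by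
  have hmN : m * N ≤ m * p * q := by nlinarith
  have hz := largerRoot_isRoot (four_mul_le_add_sq hmN)
  have hq := (le_largerRoot_of_le_mul hmN).2
  apply le_largerRoot
  set z := largerRoot (m * p + q) (m * N)
  have : N ≤ p * z := hN.trans (mul_le_mul_of_nonneg_left hq hp)
  nlinarith

lemma largerRoot_le_mul {p q N m l : ℝ} (hq : 0 ≤ q) (hN : N ≤ p * q) (hm : 0 ≤ m) (hl : 1 ≤ l) :
    largerRoot (l * m * p + q) (l * m * N) ≤ l * largerRoot (m * p + q) (m * N) := by
  have hl0 : 0 ≤ l := zero_le_one.trans hl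
  have h := largerRoot_mono (p := q) (q := l * m * p) (N := l * m * N) (m := 1) (m' := l) hq
    (by nlinarith [mul_le_mul_of_nonneg_left hN (mul_nonneg hl0 hm)]) zero_le_one hl
  rw [← largerRoot_mul hl0]
  convert h using 2 <;> ring

/-- The circle average of `log ‖ζ x - y‖`, as a function of `p = ‖x‖ ^ 2`, `q = ‖y‖ ^ 2` and
of the squared modulus `N` of the Hermitian product of `x` and `y`. -/
noncomputable def logMean (p q N : ℝ) : ℝ := Real.log (largerRoot (p + q) N) / 2

lemma logMean_lipschitz_of_le {p q N s t : ℝ} (hp : 0 < p) (hq : 0 < q) (hN : N ≤ p * q)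
    (hst : s ≤ t) :
    |logMean (Real.exp (2 * t) * p) q (Real.exp (2 * t) * N) -
      logMean (Real.exp (2 * s) * p) q (Real.exp (2 * s) * N)| ≤ t - s := by
  have hs := Real.exp_pos (2 * s)
  have hexp : Real.exp (2 * t) = Real.exp (2 * (t - s)) * Real.exp (2 * s) := by
    rw [← Real.exp_add]; ring_nf
  have hpos : 0 < largerRoot (Real.exp (2 * s) * p + q) (Real.exp (2 * s) * N) :=
    hq.trans_le (le_largerRoot_of_le_mul (by nlinarith)).2
  have h1 := largerRoot_mono hp.le hN hs.le (Real.exp_le_exp.2 (by linarith : 2 * s ≤ 2 * t))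
  have h2 := largerRoot_le_mul hq.le hN hs.le
    (Real.one_le_exp (by linarith : 0 ≤ 2 * (t - s)))
  rw [← hexp] at h2
  have h3 := Real.log_le_log hpos h1
  have h4 := Real.log_le_log (hpos.trans_le h1) h2
  rw [Real.log_mul (Real.exp_pos _).ne' hpos.ne', Real.log_exp] at h4
  unfold logMean
  rw [abs_le]
  constructor <;> linarith

lemma logMean_lipschitz {p q N : ℝ} (hp : 0 < p) (hq : 0 < q) (hN : N ≤ p * q) (s t : ℝ) :
    |logMean (Real.exp (2 * t) * p) q (Real.exp (2 * t) * N) -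
      logMean (Real.exp (2 * s) * p) q (Real.exp (2 * s) * N)| ≤ |t - s| := by
  rcases le_total s t with h | h
  · rw [abs_of_nonneg (sub_nonneg.2 h)]
    exact logMean_lipschitz_of_le hp hq hN h
  · rw [abs_sub_comm, abs_sub_comm t s, abs_of_nonneg (sub_nonneg.2 h)]
    exact logMean_lipschitz_of_le hp hq hN h

/-- The derivative of `logMean` under dilations of the first vector. -/
noncomputable def logMeanDeriv (p q N : ℝ) : ℝ := (1 + (p - q) / √((p + q) ^ 2 - 4 * N)) / 2

lemma sub_sq_le_disc {p q N : ℝ} (hN : N ≤ p * q) : (p - q) ^ 2 ≤ (p + q) ^ 2 - 4 * N := by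
  linarith

lemma logMeanDeriv_nonneg {p q N : ℝ} (hN : N ≤ p * q) : 0 ≤ logMeanDeriv p q N := by
  have h := (abs_le.1 (Real.abs_le_sqrt (sub_sq_le_disc hN))).1
  have : -1 ≤ (p - q) / √((p + q) ^ 2 - 4 * N) := by
    rcases (Real.sqrt_nonneg ((p + q) ^ 2 - 4 * N)).eq_or_lt' with h0 | h0
    · simp [h0]
    · rw [le_div_iff₀ h0]; linarith
  unfold logMeanDeriv
  linarith

lemma logMeanDeriv_pos {p q N : ℝ} (hpq : q ≤ p) : 0 < logMeanDeriv p q N := by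
  have : 0 ≤ (p - q) / √((p + q) ^ 2 - 4 * N) := div_nonneg (by linarith) (Real.sqrt_nonneg _)
  unfold logMeanDeriv
  linarith

lemma logMeanDeriv_add_swap (p q N : ℝ) : logMeanDeriv p q N + logMeanDeriv q p N = 1 := by
  unfold logMeanDeriv
  rw [add_comm q p]
  ring

lemma hasDerivAt_logMean {p q N : ℝ} (hp : 0 < p) (hq : 0 < q) (hpq : p ≠ q) (hN : N ≤ p * q) :
    HasDerivAt (fun t : ℝ => logMean (Real.exp (2 * t) * p) q (Real.exp (2 * t) * N))
      (logMeanDeriv p q N) 0 := by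
  have hD : 0 < (p + q) ^ 2 - 4 * N :=
    (pow_pos (abs_pos.2 (sub_ne_zero.2 hpq)) 2).trans_le (by rw [sq_abs]; exact sub_sq_le_disc hN)
  have hS := Real.sqrt_pos.2 hD
  have hSq := Real.sq_sqrt hD.le
  have hE : HasDerivAt (fun t : ℝ => Real.exp (2 * t)) 2 0 := by
    have := ((hasDerivAt_id (0 : ℝ)).const_mul 2).exp
    simpa using this
  have hA : HasDerivAt (fun t : ℝ => Real.exp (2 * t) * p + q) (2 * p) 0 :=
    (hE.mul_const p).add_const q
  have hdisc := (hA.pow 2).sub ((hE.mul_const N).const_mul 4)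
  have hsqrt := hdisc.sqrt (by simpa using hD.ne')
  have hroot := ((hA.add hsqrt).div_const 2).log (by simp; positivity)
  have := hroot.div_const 2
  refine this.congr_deriv ?_
  simp only [Pi.add_apply, Pi.sub_apply, Pi.pow_apply, mul_zero, Real.exp_zero, one_mul]
  unfold logMeanDeriv
  set S := √((p + q) ^ 2 - 4 * N)
  have : p + q + S ≠ 0 := by positivity
  push_cast
  field_simp
  have hN' : N = ((p + q) ^ 2 - S ^ 2) / 4 := by linarith
  rw [hN']
  ring

/-- The mean value over a circle of a logarithm of a positive trigonometric polynomial. -/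
lemma integral_log_sub_cos_sin {A α β : ℝ} (hA : 0 < A) (h : 4 * (α ^ 2 + β ^ 2) < A ^ 2) :
    ∫ θ in 0..2 * Real.pi, Real.log (A - 2 * (α * Real.cos θ + β * Real.sin θ)) =
      2 * Real.pi * Real.log (largerRoot A (α ^ 2 + β ^ 2)) := by
  set z := largerRoot A (α ^ 2 + β ^ 2) with hzdef
  have hroot : z ^ 2 - A * z + (α ^ 2 + β ^ 2) = 0 := largerRoot_isRoot h.le
  have hSpos : 0 < √(A ^ 2 - 4 * (α ^ 2 + β ^ 2)) := Real.sqrt_pos.2 (by linarith)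
  have hzA : A < 2 * z := by rw [hzdef, largerRoot]; linarith
  have hz : 0 < z := by linarith
  set w : ℂ := ⟨α / z, β / z⟩ with hw
  have hwz : ‖w‖ ^ 2 * z ^ 2 = α ^ 2 + β ^ 2 := by
    rw [← Complex.normSq_eq_norm_sq, Complex.normSq_mk]
    field_simp
  have hw1 : ‖w‖ < 1 := by
    by_contra! hc
    have : z ^ 2 ≤ α ^ 2 + β ^ 2 :=
      hwz ▸ le_mul_of_one_le_left (sq_nonneg z) (one_le_pow₀ hc)
    nlinarith
  have key : ∀ θ : ℝ, A - 2 * (α * Real.cos θ + β * Real.sin θ) =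
      z * ‖circleMap 0 1 θ - w‖ ^ 2 := by
    intro θ
    rw [← Complex.normSq_eq_norm_sq, Complex.normSq_apply]
    have h1 : (circleMap 0 1 θ).re = Real.cos θ := by simp [circleMap, Complex.exp_ofReal_mul_I_re]
    have h2 : (circleMap 0 1 θ).im = Real.sin θ := by simp [circleMap, Complex.exp_ofReal_mul_I_im]
    simp only [Complex.sub_re, Complex.sub_im, h1, h2, hw]
    field_simp
    linear_combination -z ^ 2 * Real.sin_sq_add_cos_sq θ - hroot
  have hne : ∀ θ : ℝ, ‖circleMap 0 1 θ - w‖ ≠ 0 := by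
    intro θ h0
    rw [norm_eq_zero, sub_eq_zero] at h0
    rw [← h0] at hw1
    simp [circleMap] at hw1
  have havg := circleAverage_log_norm_sub_const₀ hw1
  rw [Real.circleAverage_def, smul_eq_zero] at havg
  have hint := havg.resolve_left (by positivity)
  have hcont : Continuous fun θ : ℝ => Real.log ‖circleMap 0 1 θ - w‖ :=
    ((continuous_circleMap 0 1).sub continuous_const).norm.log hne
  calc _ = ∫ θ in 0..2 * Real.pi, (Real.log z + 2 * Real.log ‖circleMap 0 1 θ - w‖) := by
        refine intervalIntegral.integral_congr fun θ _ => ?_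
        rw [key, Real.log_mul hz.ne' (pow_ne_zero 2 (hne θ)), Real.log_pow]
        norm_num
    _ = _ := by
        rw [intervalIntegral.integral_add (by simp) ((hcont.const_mul 2).intervalIntegrable _ _),
          intervalIntegral.integral_const_mul, hint]
        simp

/-- The standard complex structure on an even-dimensional Euclidean space. -/
lemma exists_complexStructure {n : ℕ} (hn : Even n) :
    ∃ J : EuclideanSpace ℝ (Fin n) →ₗᵢ[ℝ] EuclideanSpace ℝ (Fin n),
      ∀ x y, inner ℝ (J x) y = -inner ℝ x (J y) := by
  obtain ⟨m, rfl⟩ := hn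
  let f : Fin (m + m) → Fin (m + m) := fun i =>
    if h : i.val % 2 = 0 then ⟨i.val + 1, by omega⟩ else ⟨i.val - 1, by omega⟩
  have hf : Function.Involutive f := by
    intro i
    ext
    by_cases h : i.val % 2 = 0
    · simp [f, h, show (i.val + 1) % 2 ≠ 0 by omega]
    · simp only [f, h, dite_false, show (i.val - 1) % 2 = 0 by omega, dite_true]
      omega
  let σ : Equiv.Perm (Fin (m + m)) := hf.toPerm f
  have hσσ : ∀ i, σ (σ i) = i := hf
  let ε : Fin (m + m) → ℝ := fun i => if i.val % 2 = 0 then -1 else 1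
  have hε : ∀ i, ε i * ε i = 1 := by intro i; simp only [ε]; split_ifs <;> norm_num
  have hεσ : ∀ i, ε (σ i) = -ε i := by
    intro i
    change ε (f i) = -ε i
    simp only [ε, f]
    split_ifs <;> simp_all <;> omega
  let J₀ : EuclideanSpace ℝ (Fin (m + m)) →ₗ[ℝ] EuclideanSpace ℝ (Fin (m + m)) :=
    { toFun := fun x => WithLp.toLp 2 fun i => ε i * x (σ i)
      map_add' := fun x y => by ext i; simp [mul_add]
      map_smul' := fun c x => by ext i; simp; ring }
  refine ⟨J₀.isometryOfInner fun x y => ?_, fun x y => ?_⟩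
  · simp only [PiLp.inner_apply, J₀, LinearMap.coe_mk, AddHom.coe_mk]
    rw [← Equiv.sum_comp σ fun i => (inner ℝ (x i) (y i))]
    refine Finset.sum_congr rfl fun i _ => ?_
    simp only [inner, star_trivial, RCLike.re_to_real]
    linear_combination (y (σ i) * x (σ i)) * hε i
  · simp only [PiLp.inner_apply, LinearMap.coe_isometryOfInner, J₀, LinearMap.coe_mk,
      AddHom.coe_mk]
    rw [← Equiv.sum_comp σ, ← Finset.sum_neg_distrib]
    refine Finset.sum_congr rfl fun i _ => ?_
    simp only [inner, star_trivial, RCLike.re_to_real, hσσ, hεσ]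
    ring

lemma abs_log_norm_div_norm_sub_le {E : Type*} [NormedAddCommGroup E] (w y : E) :
    |Real.log (‖y‖ / ‖w - y‖)| ≤ ‖w‖ * (‖y‖⁻¹ + ‖w - y‖⁻¹) := by
  rcases eq_or_ne y 0 with rfl | hy
  · simp; positivity
  rcases eq_or_ne (w - y) 0 with hw | hw
  · simp [hw]; positivity
  have hy := norm_pos_iff.2 hy
  have hw := norm_pos_iff.2 hw
  have h1 : ‖y‖ - ‖w - y‖ ≤ ‖w‖ := by
    have := norm_sub_le w (w - y)
    rw [sub_sub_cancel] at this
    linarith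
  have h2 : ‖w - y‖ - ‖y‖ ≤ ‖w‖ := by
    have := norm_sub_le w y
    linarith
  have l1 := Real.log_le_sub_one_of_pos (div_pos hy hw)
  have l2 := Real.log_le_sub_one_of_pos (div_pos hw hy)
  have l3 : Real.log (‖w - y‖ / ‖y‖) = -Real.log (‖y‖ / ‖w - y‖) := by
    rw [← Real.log_inv, inv_div]
  have e1 : ‖y‖ / ‖w - y‖ - 1 ≤ ‖w‖ * ‖w - y‖⁻¹ := by
    rw [← div_eq_mul_inv, ← div_self hw.ne', ← sub_div]
    gcongr
  have e2 : ‖w - y‖ / ‖y‖ - 1 ≤ ‖w‖ * ‖y‖⁻¹ := by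
    rw [← div_eq_mul_inv, ← div_self hy.ne', ← sub_div]
    gcongr
  have p1 : 0 ≤ ‖w‖ * ‖w - y‖⁻¹ := by positivity
  have p2 : 0 ≤ ‖w‖ * ‖y‖⁻¹ := by positivity
  rw [abs_le, mul_add]
  constructor <;> linarith

section ComplexStructure

variable {E : Type*} [NormedAddCommGroup E] [InnerProductSpace ℝ E]

/-- The squared modulus of the Hermitian product of `x` and `y` attached to `J`. -/
noncomputable def hermSq (J : E →ₗᵢ[ℝ] E) (x y : E) : ℝ :=
  inner ℝ x y ^ 2 + inner ℝ (J x) y ^ 2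

/-- The circle average of `log ‖ζ x - y‖` over the unit circle. -/
noncomputable def circleLog (J : E →ₗᵢ[ℝ] E) (x y : E) : ℝ :=
  logMean (‖x‖ ^ 2) (‖y‖ ^ 2) (hermSq J x y)

/-- The derivative of `circleLog` under dilations of the first vector. -/
noncomputable def circleLogDeriv (J : E →ₗᵢ[ℝ] E) (x y : E) : ℝ :=
  logMeanDeriv (‖x‖ ^ 2) (‖y‖ ^ 2) (hermSq J x y)

/-- The rotation by the angle `θ` in the complex structure `J`. -/
noncomputable def circleRot (J : E →ₗᵢ[ℝ] E) (θ : ℝ) (x : E) : E :=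
  Real.cos θ • x + Real.sin θ • J x

lemma continuous_circleRot (J : E →ₗᵢ[ℝ] E) (x : E) : Continuous fun θ => circleRot J θ x := by
  unfold circleRot
  fun_prop

lemma inner_complexStructure_self {J : E →ₗᵢ[ℝ] E} (hJ : ∀ x y, inner ℝ (J x) y = -inner ℝ x (J y))
    (x : E) : inner ℝ x (J x) = 0 := by
  have := hJ x x
  rw [real_inner_comm] at this
  linarith

lemma norm_circleRot_sq {J : E →ₗᵢ[ℝ] E} (hJ : ∀ x y, inner ℝ (J x) y = -inner ℝ x (J y))
    (a b : ℝ) (x : E) : ‖a • x + b • J x‖ ^ 2 = (a ^ 2 + b ^ 2) * ‖x‖ ^ 2 := by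
  rw [norm_add_sq_real, norm_smul, norm_smul, inner_smul_left, inner_smul_right,
    inner_complexStructure_self hJ, J.norm_map, mul_pow, mul_pow]
  simp only [Real.norm_eq_abs, sq_abs]
  ring

lemma norm_circleRot {J : E →ₗᵢ[ℝ] E} (hJ : ∀ x y, inner ℝ (J x) y = -inner ℝ x (J y))
    (θ : ℝ) (x : E) : ‖circleRot J θ x‖ = ‖x‖ := by
  have := norm_circleRot_sq hJ (Real.cos θ) (Real.sin θ) x
  rw [Real.cos_sq_add_sin_sq, one_mul] at this
  exact (pow_left_inj₀ (norm_nonneg _) (norm_nonneg _) two_ne_zero).1 this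

lemma norm_circleRot_sub_sq {J : E →ₗᵢ[ℝ] E} (hJ : ∀ x y, inner ℝ (J x) y = -inner ℝ x (J y))
    (θ : ℝ) (x y : E) : ‖circleRot J θ x - y‖ ^ 2 =
      ‖x‖ ^ 2 + ‖y‖ ^ 2 - 2 * (inner ℝ x y * Real.cos θ + inner ℝ (J x) y * Real.sin θ) := by
  rw [norm_sub_sq_real, norm_circleRot hJ, circleRot, inner_add_left, inner_smul_left,
    inner_smul_left]
  simp only [conj_trivial]
  ring

lemma hermSq_le {J : E →ₗᵢ[ℝ] E} (hJ : ∀ x y, inner ℝ (J x) y = -inner ℝ x (J y)) (x y : E) :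
    hermSq J x y ≤ ‖x‖ ^ 2 * ‖y‖ ^ 2 := by
  set N := hermSq J x y with hN
  have hN0 : 0 ≤ N := by rw [hN, hermSq]; positivity
  have h1 := norm_circleRot_sq hJ (inner ℝ x y) (inner ℝ (J x) y) x
  have h2 : (inner ℝ ((inner ℝ x y) • x + (inner ℝ (J x) y) • J x) y) = N := by
    rw [inner_add_left, inner_smul_left, inner_smul_left, hN, hermSq]
    simp only [conj_trivial]
    ring
  have h3 := pow_le_pow_left₀ hN0 (h2 ▸ real_inner_le_norm _ y) 2
  rw [mul_pow, h1] at h3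
  change N ^ 2 ≤ N * _ * _ at h3
  rcases hN0.eq_or_lt with h0 | h0
  · rw [← h0]; positivity
  · nlinarith

lemma hermSq_comm {J : E →ₗᵢ[ℝ] E} (hJ : ∀ x y, inner ℝ (J x) y = -inner ℝ x (J y)) (x y : E) :
    hermSq J x y = hermSq J y x := by
  rw [hermSq, hermSq, hJ, real_inner_comm, real_inner_comm x (J y)]
  ring

lemma circleLog_smul (J : E →ₗᵢ[ℝ] E) (t : ℝ) (x y : E) :
    circleLog J (Real.exp t • x) y =
      logMean (Real.exp (2 * t) * ‖x‖ ^ 2) (‖y‖ ^ 2) (Real.exp (2 * t) * hermSq J x y) := by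
  have : Real.exp (2 * t) = Real.exp t ^ 2 := by rw [← Real.exp_nat_mul]; norm_num
  rw [circleLog, norm_smul, mul_pow, Real.norm_eq_abs, sq_abs, hermSq, hermSq, map_smul,
    inner_smul_left, inner_smul_left, this]
  simp only [conj_trivial]
  congr 1
  ring

lemma circleLogDeriv_add_swap {J : E →ₗᵢ[ℝ] E} (hJ : ∀ x y, inner ℝ (J x) y = -inner ℝ x (J y))
    (x y : E) : circleLogDeriv J x y + circleLogDeriv J y x = 1 := by
  rw [circleLogDeriv, circleLogDeriv, hermSq_comm hJ y x]
  exact logMeanDeriv_add_swap _ _ _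

lemma integral_log_norm_div_norm_circleRot_sub {J : E →ₗᵢ[ℝ] E}
    (hJ : ∀ x y, inner ℝ (J x) y = -inner ℝ x (J y)) {x y : E} (hy : y ≠ 0) (hxy : ‖y‖ ≠ ‖x‖) :
    ∫ θ in 0..2 * Real.pi, Real.log (‖y‖ / ‖circleRot J θ x - y‖) =
      2 * Real.pi * (Real.log ‖y‖ - circleLog J x y) := by
  have hne : ∀ θ, ‖circleRot J θ x - y‖ ≠ 0 := by
    intro θ h
    rw [norm_eq_zero, sub_eq_zero] at h
    exact hxy (by rw [← h, norm_circleRot hJ])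
  have hN := hermSq_le hJ x y
  have hsq : ‖x‖ ^ 2 - ‖y‖ ^ 2 ≠ 0 := by
    rw [sub_ne_zero]
    exact fun h => hxy ((pow_left_inj₀ (norm_nonneg _) (norm_nonneg _) two_ne_zero).1 h.symm)
  have hy0 := norm_pos_iff.2 hy
  have hmain := integral_log_sub_cos_sin (A := ‖x‖ ^ 2 + ‖y‖ ^ 2) (α := (inner ℝ x y))
    (β := (inner ℝ (J x) y)) (by positivity) (by
      have := pow_pos (abs_pos.2 hsq) 2
      rw [sq_abs] at this
      change 4 * hermSq J x y < _
      linarith [sub_sq_le_disc hN])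
  have hcont : Continuous fun θ => Real.log (‖circleRot J θ x - y‖ ^ 2) :=
    (((continuous_circleRot J x).sub continuous_const).norm.pow 2).log
      fun θ => pow_ne_zero 2 (hne θ)
  simp_rw [← norm_circleRot_sub_sq hJ] at hmain
  calc _ = ∫ θ in 0..2 * Real.pi,
        (Real.log ‖y‖ - Real.log (‖circleRot J θ x - y‖ ^ 2) / 2) := by
        refine intervalIntegral.integral_congr fun θ _ => ?_
        rw [Real.log_div hy0.ne' (hne θ), Real.log_pow]
        push_cast
        ring
    _ = _ := by
        rw [intervalIntegral.integral_sub (by simp) ((hcont.div_const 2).intervalIntegrable _ _),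
          intervalIntegral.integral_div, hmain, circleLog, logMean, hermSq]
        simp
        ring

end ComplexStructure

section Integrability

variable {E : Type*} [NormedAddCommGroup E] [InnerProductSpace ℝ E] [FiniteDimensional ℝ E]
  [MeasurableSpace E] [BorelSpace E]

lemma integrableOn_inv_norm_ball (hE : 2 ≤ Module.finrank ℝ E) :
    IntegrableOn (fun y : E => ‖y‖⁻¹) (Metric.ball 0 1) := by
  have : Nontrivial E := Module.nontrivial_of_finrank_pos (R := ℝ) (by omega)
  rw [integrableOn_fun_norm_addHaar (volume : Measure E) (f := fun r => r⁻¹)]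
  refine Integrable.mono' (g := fun _ => (1 : ℝ)) (by simp) (by fun_prop) ?_
  filter_upwards [ae_restrict_mem measurableSet_Ioo] with r hr
  obtain ⟨k, hk⟩ := Nat.exists_eq_add_of_le hE
  have hr0 := hr.1
  rw [hk, show 2 + k - 1 = k + 1 by omega, smul_eq_mul, pow_succ, mul_assoc,
    mul_inv_cancel₀ hr0.ne', mul_one, Real.norm_of_nonneg (pow_nonneg hr0.le _)]
  exact pow_le_one₀ hr0.le hr.2.le

/-- Riesz-type potentials of a continuous integrable density are locally bounded. -/
lemma exists_integral_inv_norm_sub_mul_le (hE : 2 ≤ Module.finrank ℝ E) {ρ : E → ℝ}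
    (hρ : Continuous ρ) (hρi : Integrable ρ) (R : ℝ) :
    ∃ M, ∀ w : E, ‖w‖ ≤ R → Integrable (fun y => ‖w - y‖⁻¹ * |ρ y|) ∧
      ∫ y, ‖w - y‖⁻¹ * |ρ y| ≤ M := by
  obtain ⟨B, hB⟩ := (isCompact_closedBall (0 : E) (R + 1)).exists_bound_of_continuousOn
    hρ.continuousOn
  set h : E → ℝ := (Metric.ball 0 1).indicator fun y => ‖y‖⁻¹ with hh
  have hint : Integrable h :=
    (integrable_indicator_iff measurableSet_ball).2 (integrableOn_inv_norm_ball hE)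
  refine ⟨∫ y, (B * h y + |ρ y|), fun w hw => ?_⟩
  have hdom : Integrable fun y => B * h (w - y) + |ρ y| :=
    ((hint.comp_sub_left w).const_mul B).add hρi.abs
  have hle : ∀ y, ‖w - y‖⁻¹ * |ρ y| ≤ B * h (w - y) + |ρ y| := by
    intro y
    by_cases hy : w - y ∈ Metric.ball (0 : E) 1
    · rw [hh, Set.indicator_of_mem hy]
      have hyR : y ∈ Metric.closedBall (0 : E) (R + 1) := by
        rw [mem_ball_zero_iff] at hy
        rw [mem_closedBall_zero_iff]
        have := norm_sub_le w (w - y)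
        rw [sub_sub_cancel] at this
        linarith
      have h1 := mul_le_mul_of_nonneg_left (hB y hyR) (inv_nonneg.2 (norm_nonneg (w - y)))
      rw [Real.norm_eq_abs] at h1
      linarith [abs_nonneg (ρ y)]
    · rw [hh, Set.indicator_of_notMem hy]
      rw [mem_ball_zero_iff, not_lt] at hy
      have := mul_le_of_le_one_left (abs_nonneg (ρ y)) (inv_le_one_of_one_le₀ hy)
      linarith
  have hi : Integrable fun y => ‖w - y‖⁻¹ * |ρ y| := by
    refine hdom.mono' (by fun_prop) (.of_forall fun y => ?_)
    rw [Real.norm_of_nonneg (by positivity)]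
    exact hle y
  refine ⟨hi, (integral_mono hi hdom hle).trans_eq ?_⟩
  rw [integral_add ((hint.comp_sub_left w).const_mul B) hρi.abs,
    integral_add (hint.const_mul B) hρi.abs, integral_const_mul, integral_const_mul,
    integral_sub_left_eq_self h volume w]

lemma measurable_log_norm_div_circleRot (J : E →ₗᵢ[ℝ] E) {ρ : E → ℝ} (hρ : Continuous ρ) (x : E) :
    Measurable fun p : ℝ × E => Real.log (‖p.2‖ / ‖circleRot J p.1 x - p.2‖) * ρ p.2 := by
  have h1 : Measurable fun p : ℝ × E => circleRot J p.1 x :=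
    (continuous_circleRot J x).measurable.comp measurable_fst
  have h2 := hρ.measurable
  fun_prop

lemma integrable_log_norm_div_circleRot (hE : 2 ≤ Module.finrank ℝ E) {J : E →ₗᵢ[ℝ] E}
    (hJ : ∀ x y, inner ℝ (J x) y = -inner ℝ x (J y)) {ρ : E → ℝ} (hρ : Continuous ρ)
    (hρi : Integrable ρ) (x : E) :
    Integrable (fun p : ℝ × E => Real.log (‖p.2‖ / ‖circleRot J p.1 x - p.2‖) * ρ p.2)
      ((volume.restrict (Set.Ioc 0 (2 * Real.pi))).prod volume) := by
  have hmeas := measurable_log_norm_div_circleRot J hρ x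
  obtain ⟨M, hM⟩ := exists_integral_inv_norm_sub_mul_le hE hρ hρi ‖x‖
  obtain ⟨hi0, hM0⟩ := hM 0 (by simp)
  simp only [zero_sub, norm_neg] at hi0 hM0
  have hrot := fun θ => hM (circleRot J θ x) (norm_circleRot hJ θ x).le
  have hdom : ∀ θ, Integrable fun y =>
      ‖x‖ * (‖y‖⁻¹ * |ρ y|) + ‖x‖ * (‖circleRot J θ x - y‖⁻¹ * |ρ y|) :=
    fun θ => (hi0.const_mul _).add ((hrot θ).1.const_mul _)
  have hle : ∀ θ y, ‖Real.log (‖y‖ / ‖circleRot J θ x - y‖) * ρ y‖ ≤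
      ‖x‖ * (‖y‖⁻¹ * |ρ y|) + ‖x‖ * (‖circleRot J θ x - y‖⁻¹ * |ρ y|) := by
    intro θ y
    have := abs_log_norm_div_norm_sub_le (circleRot J θ x) y
    rw [norm_circleRot hJ] at this
    rw [norm_mul, Real.norm_eq_abs, Real.norm_eq_abs]
    exact (mul_le_mul_of_nonneg_right this (abs_nonneg _)).trans_eq (by ring)
  have hint : ∀ θ, Integrable fun y => Real.log (‖y‖ / ‖circleRot J θ x - y‖) * ρ y :=
    fun θ => (hdom θ).mono' (hmeas.comp measurable_prodMk_left).aestronglyMeasurable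
      (.of_forall (hle θ))
  rw [integrable_prod_iff hmeas.aestronglyMeasurable]
  refine ⟨.of_forall hint, ?_⟩
  refine Integrable.mono' (g := fun _ => ‖x‖ * M + ‖x‖ * M) (by simp)
    hmeas.aestronglyMeasurable.norm.integral_prod_right' (.of_forall fun θ => ?_)
  rw [Real.norm_of_nonneg (integral_nonneg fun y => norm_nonneg _)]
  refine (integral_mono (hint θ).norm (hdom θ) (hle θ)).trans ?_
  rw [integral_add (hi0.const_mul _) ((hrot θ).1.const_mul _), integral_const_mul,
    integral_const_mul]
  have := (hrot θ).2
  gcongr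

lemma ae_norm_ne [Nontrivial E] (r : ℝ) : ∀ᵐ y : E, ‖y‖ ≠ r := by
  rw [ae_iff]
  simpa [Metric.sphere] using Measure.addHaar_sphere (volume : Measure E) (0 : E) r

/-- A logarithmic potential averaged over a circle. -/
lemma integral_circleRot_logPotential (hE : 2 ≤ Module.finrank ℝ E) {J : E →ₗᵢ[ℝ] E}
    (hJ : ∀ x y, inner ℝ (J x) y = -inner ℝ x (J y)) {ρ : E → ℝ} (hρ : Continuous ρ)
    (hρi : Integrable ρ) (x : E) :
    Integrable (fun y => (Real.log ‖y‖ - circleLog J x y) * ρ y) ∧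
      ∫ θ in 0..2 * Real.pi, ∫ y, Real.log (‖y‖ / ‖circleRot J θ x - y‖) * ρ y =
        2 * Real.pi * ∫ y, (Real.log ‖y‖ - circleLog J x y) * ρ y := by
  have : Nontrivial E := Module.nontrivial_of_finrank_pos (R := ℝ) (by omega)
  have hpi := Real.two_pi_pos
  have hF := integrable_log_norm_div_circleRot hE hJ hρ hρi x
  have hae : (fun y => ∫ θ in Set.Ioc 0 (2 * Real.pi),
      Real.log (‖y‖ / ‖circleRot J θ x - y‖) * ρ y) =ᵐ[volume]
      fun y => 2 * Real.pi * ((Real.log ‖y‖ - circleLog J x y) * ρ y) := by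
    filter_upwards [ae_norm_ne (E := E) 0, ae_norm_ne (E := E) ‖x‖] with y hy hxy
    rw [integral_mul_const, ← intervalIntegral.integral_of_le hpi.le,
      integral_log_norm_div_norm_circleRot_sub hJ (norm_ne_zero_iff.1 hy) hxy]
    ring
  refine ⟨?_, ?_⟩
  · have := (hF.integral_prod_right.congr hae).const_mul (2 * Real.pi)⁻¹
    refine this.congr (.of_forall fun y => ?_)
    exact inv_mul_cancel_left₀ hpi.ne' _
  · rw [intervalIntegral.integral_of_le hpi.le, integral_integral_swap hF, integral_congr_ae hae,
      integral_const_mul]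

end Integrability

section Virial

variable {E : Type*} [NormedAddCommGroup E] [InnerProductSpace ℝ E]

lemma continuous_hermSq (J : E →ₗᵢ[ℝ] E) : Continuous fun p : E × E => hermSq J p.1 p.2 := by
  have := J.continuous
  unfold hermSq
  fun_prop

lemma circleLog_smul_lipschitz {J : E →ₗᵢ[ℝ] E} (hJ : ∀ x y, inner ℝ (J x) y = -inner ℝ x (J y))
    {x y : E} (hx : ‖x‖ ≠ 0) (hy : ‖y‖ ≠ 0) (s t : ℝ) :
    |circleLog J (Real.exp t • x) y - circleLog J (Real.exp s • x) y| ≤ |t - s| := by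
  rw [circleLog_smul, circleLog_smul]
  exact logMean_lipschitz (by positivity) (by positivity) (hermSq_le hJ x y) s t

lemma circleLogDeriv_nonneg {J : E →ₗᵢ[ℝ] E}
    (hJ : ∀ x y, inner ℝ (J x) y = -inner ℝ x (J y)) (x y : E) : 0 ≤ circleLogDeriv J x y :=
  logMeanDeriv_nonneg (hermSq_le hJ x y)

lemma circleLogDeriv_pos (J : E →ₗᵢ[ℝ] E) {x y : E} (h : ‖y‖ ≤ ‖x‖) :
    0 < circleLogDeriv J x y :=
  logMeanDeriv_pos (pow_le_pow_left₀ (norm_nonneg y) h 2)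

variable [FiniteDimensional ℝ E] [MeasurableSpace E] [BorelSpace E]

lemma measurable_circleLog (J : E →ₗᵢ[ℝ] E) :
    Measurable fun p : E × E => circleLog J p.1 p.2 := by
  have := (continuous_hermSq J).measurable
  unfold circleLog logMean largerRoot
  fun_prop

lemma measurable_circleLogDeriv (J : E →ₗᵢ[ℝ] E) :
    Measurable fun p : E × E => circleLogDeriv J p.1 p.2 := by
  have := (continuous_hermSq J).measurable
  unfold circleLogDeriv logMeanDeriv
  fun_prop

lemma ae_prod_norm_ne [Nontrivial E] : ∀ᵐ p : E × E, ‖p.1‖ ≠ 0 ∧ ‖p.2‖ ≠ 0 ∧ ‖p.1‖ ≠ ‖p.2‖ := by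
  rw [Measure.volume_eq_prod, Measure.ae_prod_iff_ae_ae]
  · filter_upwards [ae_norm_ne (E := E) 0] with x hx
    filter_upwards [ae_norm_ne (E := E) 0, ae_norm_ne (E := E) ‖x‖] with y hy hxy
    exact ⟨hx, hy, hxy.symm⟩
  · have h1 : MeasurableSet {p : E × E | ‖p.1‖ = 0} :=
      measurableSet_eq_fun (by fun_prop) (by fun_prop)
    have h2 : MeasurableSet {p : E × E | ‖p.2‖ = 0} :=
      measurableSet_eq_fun (by fun_prop) (by fun_prop)
    have h3 : MeasurableSet {p : E × E | ‖p.1‖ = ‖p.2‖} :=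
      measurableSet_eq_fun (by fun_prop) (by fun_prop)
    exact h1.compl.inter (h2.compl.inter h3.compl)

/-- The derivative at `t = 0` of the interaction energy of `f` dilated by `exp t` with `g`. -/
lemma hasDerivAt_integral_circleLog [Nontrivial E] {J : E →ₗᵢ[ℝ] E}
    (hJ : ∀ x y, inner ℝ (J x) y = -inner ℝ x (J y)) {f g : E → ℝ} (hf : Integrable f)
    (hg : Integrable g) :
    (∀ t : ℝ, Integrable fun p : E × E => f p.1 * g p.2 *
      (circleLog J (Real.exp t • p.1) p.2 - circleLog J p.1 p.2)) ∧
    Integrable (fun p : E × E => f p.1 * g p.2 * circleLogDeriv J p.1 p.2) ∧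
    HasDerivAt (fun t : ℝ => ∫ p : E × E, f p.1 * g p.2 *
      (circleLog J (Real.exp t • p.1) p.2 - circleLog J p.1 p.2))
      (∫ p : E × E, f p.1 * g p.2 * circleLogDeriv J p.1 p.2) 0 := by
  have hfg : Integrable fun p : E × E => f p.1 * g p.2 := hf.mul_prod hg
  have hmeas : ∀ t : ℝ, AEStronglyMeasurable fun p : E × E => f p.1 * g p.2 *
      (circleLog J (Real.exp t • p.1) p.2 - circleLog J p.1 p.2) := by
    intro t
    have hdil : Measurable fun p : E × E => (Real.exp t • p.1, p.2) := by fun_prop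
    exact hfg.aestronglyMeasurable.mul (((measurable_circleLog J).comp hdil).sub
      (measurable_circleLog J)).aestronglyMeasurable
  have hint : ∀ t : ℝ, Integrable fun p : E × E => f p.1 * g p.2 *
      (circleLog J (Real.exp t • p.1) p.2 - circleLog J p.1 p.2) := by
    intro t
    refine (hfg.norm.mul_const |t|).mono' (hmeas t) ?_
    filter_upwards [ae_prod_norm_ne (E := E)] with p hp
    have := circleLog_smul_lipschitz hJ hp.1 hp.2.1 0 t
    rw [Real.exp_zero, one_smul, sub_zero] at this
    rw [norm_mul, Real.norm_eq_abs (_ - _)]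
    gcongr
  refine ⟨hint, hasDerivAt_integral_of_dominated_loc_of_lip (bound := fun p => f p.1 * g p.2)
    univ_mem (.of_forall hmeas) (hint 0)
    (hfg.aestronglyMeasurable.mul (measurable_circleLogDeriv J).aestronglyMeasurable) ?_ hfg ?_⟩
  · filter_upwards [ae_prod_norm_ne (E := E)] with p hp
    refine LipschitzOnWith.of_dist_le_mul fun t _ s _ => ?_
    rw [Real.dist_eq, Real.dist_eq, ← mul_sub, sub_sub_sub_cancel_right, abs_mul]
    have := circleLog_smul_lipschitz hJ hp.1 hp.2.1 s t
    rw [Real.coe_nnabs]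
    gcongr
  · filter_upwards [ae_prod_norm_ne (E := E)] with p hp
    refine HasDerivAt.const_mul _ (HasDerivAt.sub_const _ ?_)
    simp_rw [circleLog_smul]
    have h1 := hp.1
    have h2 := hp.2.1
    refine hasDerivAt_logMean (by positivity) (by positivity) (fun h => hp.2.2 ?_)
      (hermSq_le hJ _ _)
    exact (pow_left_inj₀ (norm_nonneg _) (norm_nonneg _) two_ne_zero).1 h

/-- The virial identity for a logarithmic potential `u` of a density `ρ`. -/
lemma virial_identity [Nontrivial E] {J : E →ₗᵢ[ℝ] E}
    (hJ : ∀ x y, inner ℝ (J x) y = -inner ℝ x (J y)) {u ρ : E → ℝ} {c C : ℝ}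
    (he : Integrable fun x => Real.exp (Module.finrank ℝ E * u x)) (hρ : Integrable ρ)
    (hk : ∀ x, Integrable fun y => (Real.log ‖y‖ - circleLog J x y) * ρ y)
    (hu : ∀ x, u x = c * (∫ y, (Real.log ‖y‖ - circleLog J x y) * ρ y) + C) :
    c * ∫ p : E × E, Real.exp (Module.finrank ℝ E * u p.1) * ρ p.2 * circleLogDeriv J p.1 p.2 =
      ∫ x, Real.exp (Module.finrank ℝ E * u x) := by
  set d : ℝ := (Module.finrank ℝ E : ℝ) with hd
  have hd0 : 0 < d := Nat.cast_pos.2 Module.finrank_pos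
  obtain ⟨hint, -, hderiv⟩ := hasDerivAt_integral_circleLog hJ he hρ
  set V := ∫ x, Real.exp (d * u x) with hV
  set Φ : ℝ → ℝ := fun t => ∫ p : E × E, Real.exp (d * u p.1) * ρ p.2 *
    (circleLog J (Real.exp t • p.1) p.2 - circleLog J p.1 p.2) with hΦ
  have hinner : ∀ (t : ℝ) (x : E), c * ∫ y, Real.exp (d * u x) * ρ y *
      (circleLog J (Real.exp t • x) y - circleLog J x y) =
      Real.exp (d * u x) * (u x - u (Real.exp t • x)) := by
    intro t x
    have h1 : u x - u (Real.exp t • x) = c * ∫ y, ((Real.log ‖y‖ - circleLog J x y) * ρ y -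
        (Real.log ‖y‖ - circleLog J (Real.exp t • x) y) * ρ y) := by
      rw [integral_sub (hk _) (hk _), hu x, hu (Real.exp t • x)]
      ring
    rw [h1, mul_left_comm, ← integral_const_mul (Real.exp (d * u x))]
    congr 2
    ext y
    ring
  have hcΦ : ∀ t : ℝ, Integrable (fun x => Real.exp (d * u x) * (u x - u (Real.exp t • x))) ∧
      c * Φ t = ∫ x, Real.exp (d * u x) * (u x - u (Real.exp t • x)) := by
    intro t
    have h := hint t
    rw [Measure.volume_eq_prod] at h
    refine ⟨?_, ?_⟩
    · simpa only [hinner] using h.integral_prod_left.const_mul c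
    · simp only [hΦ]
      rw [Measure.volume_eq_prod, integral_prod _ h, ← integral_const_mul]
      simp only [hinner]
  have hscale : ∀ t : ℝ, Integrable (fun x => Real.exp (d * u (Real.exp t • x))) ∧
      ∫ x, Real.exp (d * u (Real.exp t • x)) = Real.exp (-(d * t)) * V := by
    intro t
    refine ⟨he.comp_smul (Real.exp_pos t).ne', ?_⟩
    rw [Measure.integral_comp_smul volume (fun x => Real.exp (d * u x)) (Real.exp t),
      abs_of_pos (by positivity), ← Real.exp_nat_mul, ← Real.exp_neg, smul_eq_mul]
  have hpos : ∀ t : ℝ, 0 ≤ Real.exp (-(d * t)) * V - V + d * (c * Φ t) := by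
    intro t
    obtain ⟨i1, e1⟩ := hcΦ t
    obtain ⟨i2, e2⟩ := hscale t
    have i3 : Integrable fun x => Real.exp (d * u (Real.exp t • x)) - Real.exp (d * u x) :=
      i2.sub he
    rw [e1, ← e2, hV, ← integral_const_mul, ← integral_sub i2 he,
      ← integral_add i3 (i1.const_mul d)]
    refine integral_nonneg fun x => ?_
    have h := Real.add_one_le_exp (d * u (Real.exp t • x) - d * u x)
    have h' := mul_le_mul_of_nonneg_left h (Real.exp_pos (d * u x)).le
    rw [← Real.exp_add, add_sub_cancel] at h'
    simp only [Pi.zero_apply]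
    linarith
  have hΦ0 : Φ 0 = 0 := by simp [hΦ]
  have hmin : IsLocalMin (fun t => Real.exp (-(d * t)) * V - V + d * (c * Φ t)) 0 :=
    .of_forall fun t => by
      simpa [hΦ0] using hpos t
  have hexp : HasDerivAt (fun t : ℝ => Real.exp (-(d * t))) (-d) 0 := by
    simpa using ((hasDerivAt_id (0 : ℝ)).const_mul d).neg.exp
  have := hmin.hasDerivAt_eq_zero
    (((hexp.mul_const V).sub_const V).add ((hderiv.const_mul c).const_mul d))
  have h0 : d * (c * (∫ p : E × E, Real.exp (d * u p.1) * ρ p.2 * circleLogDeriv J p.1 p.2) - V) =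
      0 := by linarith
  exact sub_eq_zero.1 ((mul_eq_zero.1 h0).resolve_left hd0.ne')

/-- By symmetry, the dilation derivative of a self-interaction energy is half the squared mass. -/
lemma integral_mul_circleLogDeriv_self [Nontrivial E] {J : E →ₗᵢ[ℝ] E}
    (hJ : ∀ x y, inner ℝ (J x) y = -inner ℝ x (J y)) {f : E → ℝ} (hf : Integrable f) :
    ∫ p : E × E, f p.1 * f p.2 * circleLogDeriv J p.1 p.2 = (∫ x, f x) ^ 2 / 2 := by
  obtain ⟨-, hint, -⟩ := hasDerivAt_integral_circleLog hJ hf hf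
  have hff : Integrable fun p : E × E => f p.1 * f p.2 := hf.mul_prod hf
  have hsq : ∫ p : E × E, f p.1 * f p.2 = (∫ x, f x) ^ 2 := by
    rw [Measure.volume_eq_prod, integral_prod_mul, sq]
  have hswap : ∫ p : E × E, f p.1 * f p.2 * circleLogDeriv J p.2 p.1 =
      ∫ p : E × E, f p.1 * f p.2 * circleLogDeriv J p.1 p.2 := by
    rw [Measure.volume_eq_prod, ← integral_prod_swap]
    refine integral_congr_ae (.of_forall fun p => ?_)
    simp only [Prod.fst_swap, Prod.snd_swap]
    ring
  have hsum : ∀ p : E × E, f p.1 * f p.2 * circleLogDeriv J p.2 p.1 =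
      f p.1 * f p.2 - f p.1 * f p.2 * circleLogDeriv J p.1 p.2 := by
    intro p
    linear_combination f p.1 * f p.2 * circleLogDeriv_add_swap hJ p.1 p.2
  simp_rw [hsum] at hswap
  rw [integral_sub hff hint, hsq] at hswap
  linarith

/-- A nonnegative density whose weighted dilation energy vanishes is zero almost everywhere. -/
lemma ae_eq_zero_of_integral_mul_circleLogDeriv_eq_zero [Nontrivial E] {J : E →ₗᵢ[ℝ] E}
    (hJ : ∀ x y, inner ℝ (J x) y = -inner ℝ x (J y)) {f g : E → ℝ} (hf : Integrable f)
    (hg : Integrable g) (hf0 : ∀ x, 0 < f x) (hg0 : ∀ x, 0 ≤ g x)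
    (h : ∫ p : E × E, f p.1 * g p.2 * circleLogDeriv J p.1 p.2 = 0) : g =ᵐ[volume] 0 := by
  obtain ⟨-, hint, -⟩ := hasDerivAt_integral_circleLog hJ hf hg
  rw [integral_eq_zero_iff_of_nonneg (fun p => mul_nonneg (mul_nonneg (hf0 _).le (hg0 _))
    (circleLogDeriv_nonneg hJ _ _)) hint, Measure.volume_eq_prod] at h
  have h' := Measure.ae_ae_of_ae_prod (Measure.prod_swap (μ := (volume : Measure E))
    (ν := (volume : Measure E)) ▸ h |> fun h => ae_of_ae_map measurable_swap.aemeasurable h)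
  filter_upwards [h'] with y hy
  have hopen : IsOpen {x : E | ‖y‖ < ‖x‖} := isOpen_lt continuous_const continuous_norm
  obtain ⟨x₀, hx₀⟩ := NormedSpace.exists_lt_norm ℝ E ‖y‖
  obtain ⟨x, hx, hxy⟩ := (hopen.measure_pos volume ⟨x₀, hx₀⟩).ne' |> fun h0 =>
    (frequently_ae_mem_iff.2 h0).and_eventually hy |>.exists
  have := circleLogDeriv_pos J (x := x) (y := y) (le_of_lt hx)
  simpa [(hf0 x).ne', this.ne'] using hxy

end Virial

section Bol

variable {E : Type*} [NormedAddCommGroup E] [InnerProductSpace ℝ E] [FiniteDimensional ℝ E]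
  [MeasurableSpace E] [BorelSpace E]

/-- A radial logarithmic potential equals its average over circles. -/
lemma radial_logPotential_eq (hE : 2 ≤ Module.finrank ℝ E) {J : E →ₗᵢ[ℝ] E}
    (hJ : ∀ x y, inner ℝ (J x) y = -inner ℝ x (J y)) {u ρ : E → ℝ} {c C : ℝ}
    (hρ : Continuous ρ) (hρi : Integrable ρ) (hradial : ∀ x y, ‖x‖ = ‖y‖ → u x = u y)
    (hu : ∀ x, u x = c * (∫ y, Real.log (‖y‖ / ‖x - y‖) * ρ y) + C) (x : E) :
    u x = c * (∫ y, (Real.log ‖y‖ - circleLog J x y) * ρ y) + C := by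
  have havg := (integral_circleRot_logPotential hE hJ hρ hρi x).2
  have hθ : ∀ θ : ℝ, c * (∫ y, Real.log (‖y‖ / ‖circleRot J θ x - y‖) * ρ y) = u x - C := by
    intro θ
    rw [hradial x _ (norm_circleRot hJ θ x).symm, hu (circleRot J θ x), add_sub_cancel_right]
  have h := congrArg (c * ·) havg
  simp only [← intervalIntegral.integral_const_mul, hθ, intervalIntegral.integral_const,
    sub_zero, smul_eq_mul] at h
  rw [mul_left_comm] at h
  have := mul_left_cancel₀ Real.two_pi_pos.ne' h
  linarith

/-- Bol's inequality for radial logarithmic potentials with curvature at least `κ`. -/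
theorem radial_bol (hE : 2 ≤ Module.finrank ℝ E) {J : E →ₗᵢ[ℝ] E}
    (hJ : ∀ x y, inner ℝ (J x) y = -inner ℝ x (J y)) {u Q : E → ℝ} {κ S C : ℝ}
    (huc : Continuous u) (hQc : Continuous Q) (hκ : 0 < κ) (hS : 0 < S) (hQ : ∀ x, κ ≤ Q x)
    (hρi : Integrable fun x => Q x * Real.exp (Module.finrank ℝ E * u x))
    (hradial : ∀ x y, ‖x‖ = ‖y‖ → u x = u y)
    (hu : ∀ x, u x = 2 / (κ * S) * (∫ y, Real.log (‖y‖ / ‖x - y‖) *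
      (Q y * Real.exp (Module.finrank ℝ E * u y))) + C) :
    Integrable (fun x => Real.exp (Module.finrank ℝ E * u x)) ∧
    ∫ x, Real.exp (Module.finrank ℝ E * u x) ≤ S ∧
    (∫ x, Real.exp (Module.finrank ℝ E * u x) = S ↔ ∀ x, Q x = κ) := by
  have : Nontrivial E := Module.nontrivial_of_finrank_pos (R := ℝ) (by omega)
  set e : E → ℝ := fun x => Real.exp (Module.finrank ℝ E * u x) with he
  set ρ : E → ℝ := fun x => Q x * e x with hρ
  have hec : Continuous e := by fun_prop
  have he0 : ∀ x, 0 < e x := fun x => Real.exp_pos _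
  have hle : ∀ x, κ * e x ≤ ρ x := fun x => mul_le_mul_of_nonneg_right (hQ x) (he0 x).le
  have hκi : Integrable fun x => κ * e x := by
    refine hρi.mono' (by fun_prop) (.of_forall fun x => ?_)
    rw [Real.norm_of_nonneg (mul_pos hκ (he0 x)).le]
    exact hle x
  have hei : Integrable e := (integrable_const_mul_iff hκ.ne'.isUnit _).1 hκi
  have hvir : 2 / (κ * S) * ∫ p : E × E, e p.1 * ρ p.2 * circleLogDeriv J p.1 p.2 =
      ∫ x, e x := virial_identity hJ hei hρi
    (fun x => (integral_circleRot_logPotential hE hJ (by fun_prop) hρi x).1)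
    (radial_logPotential_eq hE hJ (by fun_prop) hρi hradial hu)
  have hself := integral_mul_circleLogDeriv_self hJ hei
  have hiρ := (hasDerivAt_integral_circleLog hJ hei hρi).2.1
  have hie := (hasDerivAt_integral_circleLog hJ hei hei).2.1
  have hV : 0 < ∫ x, e x := by
    rw [integral_pos_iff_support_of_nonneg (fun x => (he0 x).le) hei,
      Set.eq_univ_of_forall fun x => Function.mem_support.2 (he0 x).ne']
    exact isOpen_univ.measure_pos volume Set.univ_nonempty
  set V := ∫ x, e x with hVdef
  have hgap : ∫ p : E × E, e p.1 * (ρ p.2 - κ * e p.2) * circleLogDeriv J p.1 p.2 =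
      κ * V * (S - V) / 2 := by
    have hT : ∫ p : E × E, e p.1 * ρ p.2 * circleLogDeriv J p.1 p.2 = κ * S * V / 2 := by
      rw [← hvir]
      field_simp
    calc _ = ∫ p : E × E, (e p.1 * ρ p.2 * circleLogDeriv J p.1 p.2 -
          κ * (e p.1 * e p.2 * circleLogDeriv J p.1 p.2)) := by
            congr 1
            ext p
            ring
      _ = _ := by
        rw [integral_sub hiρ (hie.const_mul κ), integral_const_mul, hT, hself]
        ring
  have hκV := mul_pos hκ hV
  refine ⟨hei, ?_, fun h x => ?_, fun h => ?_⟩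
  · have hgap0 : 0 ≤ κ * V * (S - V) / 2 := hgap ▸ integral_nonneg fun p =>
      mul_nonneg (mul_nonneg (he0 _).le (sub_nonneg.2 (hle _))) (circleLogDeriv_nonneg hJ _ _)
    exact sub_nonneg.1 (nonneg_of_mul_nonneg_right (by linarith) hκV)
  · rw [h, sub_self, mul_zero, zero_div] at hgap
    have hzero := ae_eq_zero_of_integral_mul_circleLogDeriv_eq_zero hJ hei (hρi.sub hκi) he0
      (fun x => sub_nonneg.2 (hle x)) hgap
    have hx := congrFun ((Continuous.ae_eq_iff_eq volume (by fun_prop) continuous_zero).1 hzero) x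
    have : (Q x - κ) * e x = 0 := by
      rw [sub_mul]
      exact hx
    exact sub_eq_zero.1 ((mul_eq_zero.1 this).resolve_right (he0 x).ne')
  · have : ∀ x, ρ x - κ * e x = 0 := fun x => by simp [hρ, h x]
    simp only [this, mul_zero, zero_mul, integral_zero] at hgap
    have := (mul_eq_zero.1 (by linarith : κ * V * (S - V) = 0)).resolve_left hκV.ne'
    linarith

end Bol

lemma sphereVol_pos (n : ℕ) : 0 < sphereVol n := by
  have := Real.Gamma_pos_of_pos (s := (n + 1 : ℝ) / 2) (by positivity)
  unfold sphereVol
  positivity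

/-- A radial normal solution whose curvature is bounded below by a positive constant is a
logarithmic potential up to an additive constant. The constant in `IsNormalSolution` lies under
the integral sign, so a nonzero one would force `u = 0`, which is not integrable against `Q`. -/
lemma IsNormalSolution.exists_eq_logPotential_add {n : ℕ} (hn : 2 ≤ n) (heven : Even n)
    {u Q : EuclideanSpace ℝ (Fin n) → ℝ} (h : IsNormalSolution n u Q)
    (hradial : ∀ x y, ‖x‖ = ‖y‖ → u x = u y) {κ : ℝ} (hκ : 0 < κ) (hQ : ∀ x, κ ≤ Q x) :
    ∃ C : ℝ, ∀ x, u x = 2 / ((Nat.factorial (n - 1) : ℝ) * sphereVol n) *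
      (∫ y, Real.log (‖y‖ / ‖x - y‖) * (Q y * Real.exp (n * u y))) + C := by
  obtain ⟨hu, hQs, hρi, C, hC⟩ := h
  have hE : 2 ≤ Module.finrank ℝ (EuclideanSpace ℝ (Fin n)) := by simpa using hn
  have : Nontrivial (EuclideanSpace ℝ (Fin n)) :=
    Module.nontrivial_of_finrank_pos (R := ℝ) (by omega)
  have hconst : ∀ a : ℝ, a ≠ 0 → ¬ Integrable fun _ : EuclideanSpace ℝ (Fin n) => a := by
    intro a ha h
    rcases integrable_const_iff.1 h with h | h
    · exact ha h
    · exact (measure_lt_top volume (Set.univ : Set (EuclideanSpace ℝ (Fin n)))).ne (by simp)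
  refine ⟨0, fun x => ?_⟩
  obtain rfl | hC0 := eq_or_ne C 0
  · simpa using hC x
  obtain ⟨J, hJ⟩ := exists_complexStructure heven
  have huc := hu.continuous
  have hQc := hQs.continuous
  have hzero : ∀ x, u x = 0 := by
    intro x
    have hslice := (integrable_log_norm_div_circleRot hE hJ (by fun_prop) hρi x).prod_right_ae
    have : NeZero (volume.restrict (Set.Ioc 0 (2 * Real.pi))) :=
      ⟨by simp [Measure.restrict_eq_zero, Real.pi_pos]⟩
    obtain ⟨θ, hθ⟩ := hslice.exists
    rw [hradial x _ (norm_circleRot hJ θ x).symm, hC, integral_undef, mul_zero]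
    exact fun h => hconst C hC0 ((h.sub hθ).congr (.of_forall fun y => add_sub_cancel_left _ _))
  refine absurd (Integrable.mono' hρi aestronglyMeasurable_const (.of_forall fun y => ?_))
    (hconst κ hκ.ne')
  simpa [hzero, abs_of_pos hκ] using hQ y

theorem radial_bol_lower_curvature (n : ℕ) (hn : 2 ≤ n) (heven : Even n)
    (u Q : EuclideanSpace ℝ (Fin n) → ℝ)
    (hnormal : IsNormalSolution n u Q)
    (hradial : ∀ x y : EuclideanSpace ℝ (Fin n), ‖x‖ = ‖y‖ → u x = u y)
    (C k : ℝ) (hC : 0 < C) (hk : 0 ≤ k)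
    (hQl : ∀ x, (Nat.factorial (n - 1) : ℝ) ≤ Q x)
    (hQu : ∀ x, Q x ≤ C * (‖x‖ + 1) ^ k) :
    (∫⁻ x, ENNReal.ofReal (Real.exp (n * u x))) ≤ ENNReal.ofReal (sphereVol n) ∧
    ((∫⁻ x, ENNReal.ofReal (Real.exp (n * u x))) = ENNReal.ofReal (sphereVol n) ↔
      ∀ x, Q x = (Nat.factorial (n - 1) : ℝ)) := by
  have hfac : (0 : ℝ) < (n - 1).factorial := by exact_mod_cast Nat.factorial_pos _
  have hS := sphereVol_pos n
  have hE : 2 ≤ Module.finrank ℝ (EuclideanSpace ℝ (Fin n)) := by simpa using hn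
  obtain ⟨J, hJ⟩ := exists_complexStructure heven
  obtain ⟨C', hC'⟩ := hnormal.exists_eq_logPotential_add hn heven hradial hfac hQl
  obtain ⟨hu, hQ, hρi, -⟩ := hnormal
  have h := radial_bol hE hJ hu.continuous hQ.continuous hfac hS hQl
    (by simpa only [finrank_euclideanSpace_fin] using hρi) hradial
    (by simpa only [finrank_euclideanSpace_fin] using hC')
  simp only [finrank_euclideanSpace_fin] at h
  obtain ⟨hi, hle, heq⟩ := h
  rw [← ofReal_integral_eq_lintegral_ofReal hi (.of_forall fun x => (Real.exp_pos _).le),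
    ENNReal.ofReal_eq_ofReal_iff (integral_nonneg fun x => (Real.exp_pos _).le) hS.le]
  exact ⟨ENNReal.ofReal_le_ofReal hle, heq⟩
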